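/- Let X ∈ Σ⁺ occur in T ∈ Σ* at position i, and let k ≥ 0 be such that X̄_k ≠ ε. Let i_k be the unique position of T_k with |exp(T_k[0..i_k))| = i + |exp(L_0 ⋯ L_{k−1})| (which carries an occurrence of X̄_k), and let i'_k be the unique position with |exp(T_k[0..i'_k))| ≤ i < |exp(T_k[0..i'_k+1))| (the position of the ancestor of T[i] in T_k). Then i'_k ≤ i_k ≤ i'_k + k. -/

import Mathlib

namespace IPM

/-- The universal alphabet `𝒜`: least fixed point of `𝒜 = Σ ∪ (𝒜 × 𝒜) ∪ (𝒜 × ℤ_{≥2})`. -/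
inductive UA (α : Type) where
  | sym  : α → UA α
  | pair : UA α → UA α → UA α
  | pow  : UA α → {m : ℕ // 2 ≤ m} → UA α
  deriving DecidableEq

variable {α : Type} [DecidableEq α]

/-- Expansion of a single symbol of the universal alphabet. -/
def expand : UA α → List α
  | .sym c => [c]
  | .pair b c => expand b ++ expand c
  | .pow b m => (List.replicate m.1 (expand b)).flatten

/-- Expansion of a string of symbols (homomorphic extension). -/
def expandStr (T : List (UA α)) : List α := (T.map expand).flatten

/-- Decomposition of a string into blocks: a block boundary is placed between
adjacent symbols `a` and `b` unless `glue a b` holds. -/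
def chunks {γ : Type} (glue : γ → γ → Bool) : List γ → List (List γ)
  | [] => []
  | [a] => [[a]]
  | a :: b :: rest =>
    match chunks glue (b :: rest) with
    | [] => [[a]]
    | blk :: G => if glue a b then (a :: blk) :: G else [a] :: blk :: G

/-- Collapse a block: a length-1 block stays, a power block `A^m` (m ≥ 2) becomes the
symbol `(A, m)`, and a length-2 block `BC` with `B ≠ C` becomes the symbol `(B, C)`. -/
def collapse : List (UA α) → List (UA α)
  | [] => []
  | [a] => [a]
  | a :: b :: rest =>
    if (b :: rest).all (fun x => decide (x = a)) then
      [.pow a ⟨rest.length + 2, by omega⟩]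
    else [.pair a b]

/-- Shrinking with respect to a glue relation: decompose into blocks and collapse them. -/
def shrinkWith (glue : UA α → UA α → Bool) (T : List (UA α)) : List (UA α) :=
  ((chunks glue T).map collapse).flatten

/-- In the `rle_B`-decomposition, no boundary is placed between `a` and `b` iff `a = b ∈ B`. -/
def rleGlue (B : Set (UA α)) [DecidablePred (· ∈ B)] : UA α → UA α → Bool :=
  fun a b => decide (a = b ∧ a ∈ B)

/-- In the `pc_{L,R}`-decomposition, no boundary is placed between `a` and `b`
iff `a ∈ L` and `b ∈ R`. -/
def pcGlue (L R : Set (UA α)) [DecidablePred (· ∈ L)] [DecidablePred (· ∈ R)] :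
    UA α → UA α → Bool :=
  fun a b => decide (a ∈ L ∧ b ∈ R)

/-- Restricted run-length encoding `rle_B`. -/
def rleC (B : Set (UA α)) [DecidablePred (· ∈ B)] (T : List (UA α)) : List (UA α) :=
  shrinkWith (rleGlue B) T

/-- Restricted pair compression `pc_{L,R}`. -/
def pcC (L R : Set (UA α)) [DecidablePred (· ∈ L)] [DecidablePred (· ∈ R)]
    (T : List (UA α)) : List (UA α) :=
  shrinkWith (pcGlue L R) T


section Recompression

variable (Bs Ls Rs : ℕ → Set (UA α))
variable [∀ k, DecidablePred (· ∈ Bs k)] [∀ k, DecidablePred (· ∈ Ls k)]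
variable [∀ k, DecidablePred (· ∈ Rs k)]

/-- The glue relation of `shrink_k`: run-length encoding `rle_{ℬ_k}` for odd `k`,
pair compression `pc_{ℒ_k,ℛ_k}` for even `k`. -/
def glueK (k : ℕ) : UA α → UA α → Bool :=
  if k % 2 = 1 then rleGlue (Bs k) else pcGlue (Ls k) (Rs k)

/-- `shrink_k`: `rle_{ℬ_k}` for odd `k`, `pc_{ℒ_k,ℛ_k}` for even `k`. -/
def shrinkK (k : ℕ) (T : List (UA α)) : List (UA α) :=
  shrinkWith (glueK Bs Ls Rs k) T

/-- The restricted recompression sequence: `T_0 = T`, `T_k = shrink_k(T_{k-1})`. -/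
def Tseq (T : List α) : ℕ → List (UA α)
  | 0 => T.map .sym
  | k + 1 => shrinkK Bs Ls Rs (k + 1) (Tseq T k)

/-- Whether a string consists of copies of a single symbol. -/
def isUniform : List (UA α) → Bool
  | [] => true
  | a :: rest => rest.all (fun x => decide (x = a))

/-- The leftmost block of the `glue`-decomposition of `T`, or `ε` if there are no
blocks or that block consists of two distinct symbols. -/
def leftBlock (glue : UA α → UA α → Bool) (T : List (UA α)) : List (UA α) :=
  match chunks glue T with
  | [] => []
  | blk :: _ => if isUniform blk then blk else []

/-- The rightmost block of the `glue`-decomposition of `T`, or `ε` if there is at most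
one block or that block consists of two distinct symbols. -/
def rightBlock (glue : UA α → UA α → Bool) (T : List (UA α)) : List (UA α) :=
  let G := chunks glue T
  if G.length ≤ 1 then []
  else
    let blk := G.getLastD []
    if isUniform blk then blk else []

/-- The popped-sequence strings `X̄_k`: `X̄_0 = X` and
`X̄_{k+1} = shrink_{k+1}(X̄'_k)` where `X̄_k = L_k ⬝ X̄'_k ⬝ R_k`. -/
def Xbar (X : List α) : ℕ → List (UA α)
  | 0 => X.map .sym
  | k + 1 =>
    let Xb := Xbar X k
    let L := leftBlock (glueK Bs Ls Rs (k + 1)) Xb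
    let R := rightBlock (glueK Bs Ls Rs (k + 1)) Xb
    shrinkK Bs Ls Rs (k + 1) ((Xb.drop L.length).take (Xb.length - L.length - R.length))

/-- The popped-sequence block `L_k`. -/
def Lblk (X : List α) (k : ℕ) : List (UA α) :=
  leftBlock (glueK Bs Ls Rs (k + 1)) (Xbar Bs Ls Rs X k)

/-- The popped-sequence block `R_k`. -/
def Rblk (X : List α) (k : ℕ) : List (UA α) :=
  rightBlock (glueK Bs Ls Rs (k + 1)) (Xbar Bs Ls Rs X k)

end Recompression

/-- The `glue`-decomposition of a concatenation `A ++ B` has a boundary between `A` and `B`. -/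
def Boundary {γ : Type} (glue : γ → γ → Bool) (A B : List γ) : Prop :=
  ∀ a ∈ A.getLast?, ∀ b ∈ B.head?, glue a b = false

/-- Every block is uniform, or every block has at most two symbols. -/
def ShortOrUniform {γ : Type} (glue : γ → γ → Bool) : Prop :=
  (∀ a b, glue a b = true → a = b) ∨ (∀ a b c, glue a b = true → glue b c = false)

section Chunks

variable {γ : Type} (glue : γ → γ → Bool)

theorem chunks_eq_nil_iff (T : List γ) : chunks glue T = [] ↔ T = [] := by
  fun_cases chunks glue T <;> simp_all

theorem chunks_cons_of_chunks_eq {a : γ} {T blk : List γ} {G : List (List γ)}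
    (h : chunks glue T = blk :: G) :
    ∃ b, T.head? = some b ∧
      chunks glue (a :: T) = if glue a b then (a :: blk) :: G else [a] :: blk :: G := by
  cases T with
  | nil => simp [chunks] at h
  | cons b rest => exact ⟨b, rfl, by simp [chunks, h]⟩

theorem flatten_chunks (T : List γ) : (chunks glue T).flatten = T := by
  induction T with
  | nil => simp [chunks]
  | cons a T ih =>
    rcases hc : chunks glue T with _ | ⟨blk, G⟩
    · rw [chunks_eq_nil_iff] at hc
      simp [hc, chunks]
    · obtain ⟨b, -, h⟩ := chunks_cons_of_chunks_eq glue (a := a) hc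
      rw [h]
      rw [hc] at ih
      split_ifs <;> simp [← ih]

theorem ne_nil_of_mem_chunks {T blk : List γ} (h : blk ∈ chunks glue T) : blk ≠ [] := by
  induction T generalizing blk with
  | nil => simp [chunks] at h
  | cons a T ih =>
    rcases hc : chunks glue T with _ | ⟨blk', G⟩
    · rw [chunks_eq_nil_iff] at hc
      simp [hc, chunks] at h
      simp [h]
    · obtain ⟨b, -, h'⟩ := chunks_cons_of_chunks_eq glue (a := a) hc
      rw [h'] at h
      rw [hc] at ih
      split_ifs at h <;> simp only [List.mem_cons] at h ih <;> grind

theorem head?_flatten_chunks {T blk : List γ} {G : List (List γ)}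
    (h : chunks glue T = blk :: G) : blk.head? = T.head? := by
  have hne : blk ≠ [] := ne_nil_of_mem_chunks glue (T := T) (by simp [h])
  have := flatten_chunks glue T
  rw [h] at this
  rw [← this, List.flatten_cons, List.head?_append_of_ne_nil _ hne]

theorem isChain_of_mem_chunks {T blk : List γ} (h : blk ∈ chunks glue T) :
    blk.IsChain (fun a b => glue a b = true) := by
  induction T generalizing blk with
  | nil => simp [chunks] at h
  | cons a T ih =>
    rcases hc : chunks glue T with _ | ⟨blk', G⟩
    · rw [chunks_eq_nil_iff] at hc
      simp [hc, chunks] at h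
      simp [h]
    · obtain ⟨b, hb, h'⟩ := chunks_cons_of_chunks_eq glue (a := a) hc
      rw [← head?_flatten_chunks glue hc] at hb
      rw [h'] at h
      rw [hc] at ih
      split_ifs at h with hg
      · rcases List.mem_cons.1 h with rfl | h
        · refine (ih List.mem_cons_self).cons ?_
          simp [hb, hg]
        · exact ih (List.mem_cons_of_mem _ h)
      · rcases List.mem_cons.1 h with rfl | h
        · simp
        · exact ih h

theorem boundary_of_chunks_eq_append {T : List γ} {G H : List (List γ)}
    (h : chunks glue T = G ++ H) : Boundary glue G.flatten H.flatten := by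
  induction T generalizing G with
  | nil =>
    simp [chunks] at h
    simp [h, Boundary]
  | cons a T ih =>
    rcases G with _ | ⟨g, G⟩
    · simp [Boundary]
    have hflat := flatten_chunks glue T
    rcases hc : chunks glue T with _ | ⟨blk, K⟩
    · rw [chunks_eq_nil_iff] at hc
      subst hc
      simp [chunks] at h
      simp [h, Boundary]
    · obtain ⟨b, hb, h'⟩ := chunks_cons_of_chunks_eq glue (a := a) hc
      have hne : blk ≠ [] := ne_nil_of_mem_chunks glue (T := T) (by simp [hc])
      rw [h'] at h
      split_ifs at h with hg
      · simp only [List.cons_append, List.cons.injEq] at h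
        obtain ⟨rfl, rfl⟩ := h
        have := ih (G := blk :: G) (by simpa using hc)
        obtain ⟨x, blk, rfl⟩ := List.exists_cons_of_ne_nil hne
        simpa [Boundary, List.getLast?_cons_cons] using this
      · simp only [List.cons_append, List.cons.injEq] at h
        obtain ⟨rfl, h⟩ := h
        rcases G with _ | ⟨g, G⟩
        · simp only [List.nil_append] at h
          have : H.flatten = T := by rw [← h, ← hc, hflat]
          simp_all [Boundary]
        · have := ih (G := g :: G) (by rw [hc, h])
          have hg' : g ≠ [] := by
            simp only [List.cons_append, List.cons.injEq] at h
            exact h.1 ▸ hne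
          obtain ⟨x, g, rfl⟩ := List.exists_cons_of_ne_nil hg'
          simpa [Boundary, List.getLast?_cons_cons] using this

theorem chunks_append_of_boundary {A B : List γ} (h : Boundary glue A B) :
    chunks glue (A ++ B) = chunks glue A ++ chunks glue B := by
  induction A with
  | nil => simp [chunks]
  | cons a A ih =>
    cases A with
    | nil =>
      rcases hc : chunks glue B with _ | ⟨blk, G⟩
      · rw [chunks_eq_nil_iff] at hc
        simp [hc, chunks]
      · obtain ⟨b, hb, h'⟩ := chunks_cons_of_chunks_eq glue (a := a) hc
        have : glue a b = false := h a (by simp) b hb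
        simp [h', this, chunks]
    | cons a' A =>
      have ih := ih (by simpa [Boundary, List.getLast?_cons_cons] using h)
      rcases hc : chunks glue (a' :: A) with _ | ⟨blk, G⟩
      · simp [chunks_eq_nil_iff] at hc
      · rw [hc] at ih
        simp only [List.cons_append] at ih
        simp only [List.cons_append, chunks, hc, ih]
        split_ifs <;> simp

theorem length_chunks_cons_le (a : γ) (T : List γ) :
    (chunks glue (a :: T)).length ≤ (chunks glue T).length + 1 := by
  rcases hc : chunks glue T with _ | ⟨blk, G⟩
  · rw [chunks_eq_nil_iff] at hc
    simp [hc, chunks]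
  · obtain ⟨b, -, h⟩ := chunks_cons_of_chunks_eq glue (a := a) hc
    rw [h]
    split_ifs <;> simp

theorem length_chunks_append_le (A B : List γ) :
    (chunks glue (A ++ B)).length ≤ A.length + (chunks glue B).length := by
  induction A with
  | nil => simp
  | cons a A ih =>
    have := length_chunks_cons_le glue a (A ++ B)
    simp only [List.cons_append, List.length_cons]
    omega

theorem length_chunks_le_one {T : List γ} (h : T.IsChain (fun a b => glue a b = true)) :
    (chunks glue T).length ≤ 1 := by
  induction T with
  | nil => simp [chunks]
  | cons a T ih =>
    rcases hc : chunks glue T with _ | ⟨blk, G⟩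
    · rw [chunks_eq_nil_iff] at hc
      simp [hc, chunks]
    · obtain ⟨b, hb, h'⟩ := chunks_cons_of_chunks_eq glue (a := a) hc
      have hg : glue a b = true := (List.isChain_cons.1 h).1 b hb
      simpa [h', hg, hc] using ih h.tail

theorem exists_chunks_append_eq (A C : List γ) :
    ∃ G H, chunks glue (A ++ C) = G ++ H ∧ G.flatten <+: A ∧
      H.length ≤ (chunks glue C).length := by
  induction A with
  | nil => exact ⟨[], chunks glue C, by simp⟩
  | cons a A ih =>
    obtain ⟨G, H, hc, hG, hH⟩ := ih
    rcases hc' : chunks glue (A ++ C) with _ | ⟨blk, K⟩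
    · rw [chunks_eq_nil_iff] at hc'
      simp only [List.append_eq_nil_iff] at hc'
      obtain ⟨rfl, rfl⟩ := hc'
      exact ⟨[[a]], [], by simp [chunks]⟩
    · obtain ⟨b, -, h⟩ := chunks_cons_of_chunks_eq glue (a := a) hc'
      rw [hc'] at hc
      rw [List.cons_append, h]
      rcases G with _ | ⟨g, G⟩
      · simp only [List.nil_append] at hc
        subst hc
        split_ifs
        · exact ⟨[], _, rfl, by simp, by simpa using hH⟩
        · exact ⟨[[a]], _, rfl, by simp, hH⟩
      · simp only [List.cons_append, List.cons.injEq] at hc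
        obtain ⟨rfl, rfl⟩ := hc
        split_ifs
        · exact ⟨(a :: blk) :: G, H, rfl, by simpa using hG, hH⟩
        · exact ⟨[a] :: blk :: G, H, rfl, by simpa using hG, hH⟩

end Chunks

theorem eq_replicate_of_isUniform {a : UA α} {l : List (UA α)} (h : isUniform (a :: l) = true) :
    a :: l = List.replicate (l.length + 1) a := by
  rw [List.eq_replicate_iff]
  simpa [isUniform] using h

theorem exists_eq_pair_of_not_isUniform {glue : UA α → UA α → Bool} (hg : ShortOrUniform glue)
    {blk : List (UA α)} (hc : blk.IsChain (fun a b => glue a b = true))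
    (hu : ¬ isUniform blk = true) :
    ∃ a b, blk = [a, b] ∧ (∀ p, glue p a = false) ∧ (∀ s, glue b s = false) := by
  rcases hg with hg | hg
  · exfalso
    apply hu
    clear hu
    have hc' : blk.IsChain (fun a b => a = b) := hc.imp hg
    cases blk with
    | nil => rfl
    | cons a l =>
      have := List.isChain_iff_pairwise.1 hc'
      simp only [isUniform, List.all_eq_true, decide_eq_true_eq]
      intro x hx
      exact ((List.pairwise_cons.1 this).1 x hx).symm
  · rcases blk with _ | ⟨a, _ | ⟨b, _ | ⟨c, l⟩⟩⟩
    · simp [isUniform] at hu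
    · simp [isUniform] at hu
    · simp only [List.isChain_cons_cons, List.isChain_singleton, and_true] at hc
      refine ⟨a, b, rfl, fun p => ?_, fun s => hg a b s hc⟩
      by_contra hp
      have := hg p a b (by simpa using hp)
      simp [hc] at this
    · simp only [List.isChain_cons_cons] at hc
      have := hg a b c hc.1
      simp [hc.2.1] at this

theorem expandStr_append {β : Type} (A B : List (UA β)) :
    expandStr (A ++ B) = expandStr A ++ expandStr B := by
  simp [expandStr]

theorem expand_ne_nil {β : Type} (a : UA β) : expand a ≠ [] := by
  induction a with
  | sym c => simp [expand]
  | pair b c hb hc => simp [expand, hb]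
  | pow b m hb =>
    obtain ⟨m, hm⟩ := m
    simp only [expand, ne_eq, List.flatten_eq_nil_iff, List.mem_replicate, not_forall]
    exact ⟨_, ⟨by omega, rfl⟩, hb⟩

theorem length_expandStr_take_lt {β : Type} {T : List (UA β)} {m n : ℕ}
    (hmn : m < n) (hn : n ≤ T.length) :
    (expandStr (T.take m)).length < (expandStr (T.take n)).length := by
  obtain ⟨d, rfl⟩ := Nat.exists_eq_add_of_lt hmn
  rw [Nat.add_assoc, List.take_add, expandStr_append, List.length_append]
  obtain ⟨x, l, hx⟩ : ∃ x l, T.drop m = x :: l :=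
    List.exists_cons_of_ne_nil (by simp; omega)
  have := List.length_pos_of_ne_nil (expand_ne_nil x)
  simp only [hx, List.take_succ_cons, expandStr, List.map_cons, List.flatten_cons,
    List.length_append]
  omega

theorem expandStr_map_sym {β : Type} (l : List β) : expandStr (l.map .sym) = l := by
  induction l with
  | nil => rfl
  | cons a l ih => simpa [expandStr, expand] using ih

theorem length_collapse_le (blk : List (UA α)) : (collapse blk).length ≤ 1 := by
  fun_cases collapse blk <;> simp

theorem length_flatten_map_collapse_le (G : List (List (UA α))) :
    (G.map collapse).flatten.length ≤ G.length := by
  induction G with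
  | nil => simp
  | cons g G ih =>
    have := length_collapse_le g
    simp only [List.map_cons, List.flatten_cons, List.length_append, List.length_cons]
    omega

theorem expandStr_collapse {glue : UA α → UA α → Bool} (hg : ShortOrUniform glue)
    {blk : List (UA α)} (hc : blk.IsChain (fun a b => glue a b = true)) :
    expandStr (collapse blk) = expandStr blk := by
  rcases blk with _ | ⟨a, _ | ⟨b, l⟩⟩
  · rfl
  · rfl
  · by_cases hu : isUniform (a :: b :: l) = true
    · rw [eq_replicate_of_isUniform hu]
      simp [collapse, List.replicate_succ, expandStr, expand]
    · obtain ⟨x, y, h, -⟩ := exists_eq_pair_of_not_isUniform hg hc hu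
      simp only [isUniform] at hu
      simp only [collapse, if_neg hu]
      simp only [List.cons.injEq] at h
      simp [h, expandStr, expand]

theorem expandStr_flatten_map_collapse {glue : UA α → UA α → Bool} (hg : ShortOrUniform glue)
    {G : List (List (UA α))} (hG : ∀ blk ∈ G, blk.IsChain (fun a b => glue a b = true)) :
    expandStr (G.map collapse).flatten = expandStr G.flatten := by
  induction G with
  | nil => rfl
  | cons g G ih =>
    simp only [List.map_cons, List.flatten_cons, expandStr_append]
    rw [ih fun blk h => hG blk (List.mem_cons_of_mem _ h),
      expandStr_collapse hg (hG g List.mem_cons_self)]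

theorem expandStr_shrinkWith {glue : UA α → UA α → Bool} (hg : ShortOrUniform glue)
    (T : List (UA α)) : expandStr (shrinkWith glue T) = expandStr T := by
  rw [shrinkWith, expandStr_flatten_map_collapse hg fun _ h => isChain_of_mem_chunks glue h,
    flatten_chunks]

theorem shrinkWith_append_of_boundary {glue : UA α → UA α → Bool} {A B : List (UA α)}
    (h : Boundary glue A B) :
    shrinkWith glue (A ++ B) = shrinkWith glue A ++ shrinkWith glue B := by
  simp [shrinkWith, chunks_append_of_boundary glue h]

theorem exists_shrinkWith_append_eq {glue : UA α → UA α → Bool} (hg : ShortOrUniform glue)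
    (A B L : List (UA α)) (hL : (chunks glue L).length ≤ 1) :
    ∃ A' B', shrinkWith glue (A ++ B ++ L) = A' ++ B' ∧
      (expandStr A').length ≤ (expandStr A).length ∧ B'.length ≤ B.length + 1 := by
  obtain ⟨G, H, h, ⟨C, hG⟩, hH⟩ := exists_chunks_append_eq glue A (B ++ L)
  refine ⟨(G.map collapse).flatten, (H.map collapse).flatten, ?_, ?_, ?_⟩
  · simp [shrinkWith, List.append_assoc, h]
  · rw [expandStr_flatten_map_collapse hg, ← hG, expandStr_append, List.length_append]
    · omega
    · intro blk hb
      exact isChain_of_mem_chunks glue (T := A ++ (B ++ L)) (by simp [h, hb])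
  · have := length_flatten_map_collapse_le H
    have := length_chunks_append_le glue B L
    omega

/-- What remains of `X` after popping its leftmost and rightmost blocks. -/
def popped (glue : UA α → UA α → Bool) (X : List (UA α)) : List (UA α) :=
  (X.drop (leftBlock glue X).length).take
    (X.length - (leftBlock glue X).length - (rightBlock glue X).length)

theorem popped_eq {glue : UA α → UA α → Bool} {X Y : List (UA α)}
    (h : X = leftBlock glue X ++ Y ++ rightBlock glue X) : popped glue X = Y := by
  have hlen := congrArg List.length h
  simp only [List.length_append] at hlen
  have hd : X.drop (leftBlock glue X).length = Y ++ rightBlock glue X := by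
    generalize leftBlock glue X = L at *
    generalize rightBlock glue X = R at *
    simp [h]
  rw [popped, hd, show X.length - (leftBlock glue X).length - (rightBlock glue X).length
    = Y.length by omega]
  simp

theorem Boundary.append_left {γ : Type} {glue : γ → γ → Bool} {A B : List γ}
    (h : Boundary glue A B) (hA : A ≠ []) (P : List γ) : Boundary glue (P ++ A) B := by
  simpa [Boundary, List.getLast?_append_of_ne_nil _ hA] using h

theorem Boundary.append_right {γ : Type} {glue : γ → γ → Bool} {A B : List γ}
    (h : Boundary glue A B) (hB : B ≠ []) (S : List γ) : Boundary glue A (B ++ S) := by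
  simpa [Boundary, List.head?_append_of_ne_nil _ hB] using h

theorem length_chunks_leftBlock_le (glue : UA α → UA α → Bool) (X : List (UA α)) :
    (chunks glue (leftBlock glue X)).length ≤ 1 := by
  apply length_chunks_le_one
  unfold leftBlock
  split
  · simp
  · rename_i blk G h
    split_ifs
    · exact isChain_of_mem_chunks glue (T := X) (by simp [h])
    · simp

theorem popped_spec {glue : UA α → UA α → Bool} (hg : ShortOrUniform glue)
    {X : List (UA α)} (hne : popped glue X ≠ []) :
    X = leftBlock glue X ++ popped glue X ++ rightBlock glue X ∧
      (∀ P, Boundary glue (P ++ leftBlock glue X) (popped glue X)) ∧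
      (∀ S, Boundary glue (popped glue X) (rightBlock glue X ++ S)) := by
  have hflat := flatten_chunks glue X
  rcases hc : chunks glue X with _ | ⟨blk, G⟩
  · rw [chunks_eq_nil_iff] at hc
    simp [popped, hc] at hne
  have hchain : ∀ b ∈ blk :: G, b.IsChain (fun a b => glue a b = true) :=
    fun b hb => isChain_of_mem_chunks glue (T := X) (hc ▸ hb)
  have hnil : ∀ b ∈ blk :: G, b ≠ [] :=
    fun b hb => ne_nil_of_mem_chunks glue (T := X) (hc ▸ hb)
  have hL : leftBlock glue X = if isUniform blk then blk else [] := by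
    simp [leftBlock, hc]
  rw [hc] at hflat
  rcases List.eq_nil_or_concat G with rfl | ⟨M, blk', rfl⟩
  · have hR : rightBlock glue X = [] := by simp [rightBlock, hc]
    simp only [List.flatten_cons, List.flatten_nil, List.append_nil] at hflat
    subst hflat
    by_cases hu : isUniform blk = true
    · rw [if_pos hu] at hL
      exact absurd (popped_eq (Y := []) (by simp [hL, hR])) hne
    · rw [if_neg hu] at hL
      have hp : popped glue blk = blk := popped_eq (by simp [hL, hR])
      obtain ⟨a, b, rfl, ha, hb⟩ := exists_eq_pair_of_not_isUniform hg (hchain _ (by simp)) hu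
      rw [hp, hL, hR]
      simp [Boundary, ha, hb]
  · have hR : rightBlock glue X = if isUniform blk' then blk' else [] := by
      have hlast : (blk :: (M ++ [blk'])).getLast? = some blk' :=
        List.getLast?_concat (l := blk :: M)
      simp [rightBlock, hc, List.getLastD_eq_getLast?, hlast]
    have hb₁ := boundary_of_chunks_eq_append glue (G := [blk]) (H := M.concat blk') hc
    have hb₂ := boundary_of_chunks_eq_append glue (G := blk :: M) (H := [blk'])
      (by simpa using hc)
    simp only [List.concat_eq_append, List.flatten_append, List.flatten_cons, List.flatten_nil,
      List.append_nil] at hb₁ hb₂ hflat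
    have hblk : blk ≠ [] := hnil _ (by simp)
    have hblk' : blk' ≠ [] := hnil _ (by simp)
    have hch := hchain blk (by simp)
    have hch' := hchain blk' (by simp)
    by_cases hu : isUniform blk = true <;> by_cases hu' : isUniform blk' = true
    · rw [if_pos hu] at hL
      rw [if_pos hu'] at hR
      have hp : popped glue X = M.flatten := popped_eq (by rw [hL, hR, ← hflat]; simp)
      rw [hp] at hne ⊢
      rw [hL, hR]
      refine ⟨by rw [← hflat]; simp, fun P => Boundary.append_left ?_ hblk P,
        fun S => Boundary.append_right ?_ hblk' S⟩
      · simpa [Boundary, List.head?_append_of_ne_nil _ hne] using hb₁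
      · simpa [Boundary, List.getLast?_append_of_ne_nil _ hne] using hb₂
    · rw [if_pos hu] at hL
      rw [if_neg hu'] at hR
      have hp : popped glue X = M.flatten ++ blk' := popped_eq (by rw [hL, hR, ← hflat]; simp)
      rw [hp, hL, hR]
      refine ⟨by rw [← hflat]; simp, fun P => Boundary.append_left hb₁ hblk P, fun S => ?_⟩
      obtain ⟨a, b, rfl, -, hb⟩ := exists_eq_pair_of_not_isUniform hg hch' hu'
      simp [Boundary, hb]
    · rw [if_neg hu] at hL
      rw [if_pos hu'] at hR
      have hp : popped glue X = blk ++ M.flatten := popped_eq (by rw [hL, hR, ← hflat]; simp)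
      rw [hp, hL, hR]
      refine ⟨by rw [← hflat]; simp, fun P => ?_, fun S => Boundary.append_right hb₂ hblk' S⟩
      obtain ⟨a, b, rfl, ha, -⟩ := exists_eq_pair_of_not_isUniform hg hch hu
      simp [Boundary, ha]
    · rw [if_neg hu] at hL
      rw [if_neg hu'] at hR
      have hp : popped glue X = blk ++ M.flatten ++ blk' :=
        popped_eq (by rw [hL, hR, ← hflat]; simp)
      rw [hp, hL, hR]
      refine ⟨by rw [← hflat]; simp, fun P => ?_, fun S => ?_⟩
      · obtain ⟨a, b, rfl, ha, -⟩ := exists_eq_pair_of_not_isUniform hg hch hu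
        simp [Boundary, ha]
      · obtain ⟨a, b, rfl, -, hb⟩ := exists_eq_pair_of_not_isUniform hg hch' hu'
        simp [Boundary, hb]

/-- Shrinking `T = A ++ B ++ X ++ S` shrinks `popped X` independently of its context, and the part
of the prefix that follows `A` grows by at most one symbol. -/
theorem exists_shrinkWith_eq {glue : UA α → UA α → Bool} (hg : ShortOrUniform glue)
    {A B X S : List (UA α)} (hne : popped glue X ≠ []) :
    ∃ A' B' S', shrinkWith glue (A ++ B ++ X ++ S) =
        A' ++ B' ++ shrinkWith glue (popped glue X) ++ S' ∧
      (expandStr A').length ≤ (expandStr A).length ∧ B'.length ≤ B.length + 1 ∧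
      expandStr (A' ++ B') = expandStr (A ++ B ++ leftBlock glue X) := by
  obtain ⟨hX, hl, hr⟩ := popped_spec hg hne
  obtain ⟨A', B', h, hA, hB⟩ :=
    exists_shrinkWith_append_eq hg A B _ (length_chunks_leftBlock_le glue X)
  refine ⟨A', B', shrinkWith glue (rightBlock glue X ++ S), ?_, hA, hB, ?_⟩
  · have hsplit : A ++ B ++ X ++ S =
        (A ++ B ++ leftBlock glue X) ++ (popped glue X ++ (rightBlock glue X ++ S)) := by
      conv_lhs => rw [hX]
      simp
    rw [hsplit, shrinkWith_append_of_boundary ((hl _).append_right hne _),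
      shrinkWith_append_of_boundary (hr S), h]
    simp
  · rw [← h, expandStr_shrinkWith hg]

section Recompression

variable (Bs Ls Rs : ℕ → Set (UA α))
variable [∀ k, DecidablePred (· ∈ Bs k)] [∀ k, DecidablePred (· ∈ Ls k)]
variable [∀ k, DecidablePred (· ∈ Rs k)]

theorem shortOrUniform_glueK (hdisj : ∀ k, k % 2 = 0 → Disjoint (Ls k) (Rs k)) (k : ℕ) :
    ShortOrUniform (glueK Bs Ls Rs k) := by
  unfold glueK
  split_ifs with h
  · left
    intro a b hab
    simp only [rleGlue, decide_eq_true_eq] at hab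
    exact hab.1
  · right
    intro a b c hab
    simp only [pcGlue, decide_eq_true_eq, decide_eq_false_iff_not] at hab ⊢
    exact fun hbc => Set.disjoint_left.1 (hdisj k (by omega)) hbc.1 hab.2

theorem Xbar_succ (X : List α) (k : ℕ) :
    Xbar Bs Ls Rs X (k + 1) = shrinkK Bs Ls Rs (k + 1)
      (popped (glueK Bs Ls Rs (k + 1)) (Xbar Bs Ls Rs X k)) := rfl

/-- `X̄_k` occurs in `T_k`, preceded by at most `k` symbols that follow a prefix of `T_k`
whose expansion ends at or before position `i`. -/
theorem exists_Tseq_eq (hdisj : ∀ k, k % 2 = 0 → Disjoint (Ls k) (Rs k))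
    {T X : List α} {i : ℕ} (hi : i + X.length ≤ T.length) (hocc : (T.drop i).take X.length = X)
    (k : ℕ) (hk : Xbar Bs Ls Rs X k ≠ []) :
    ∃ A B S, Tseq Bs Ls Rs T k = A ++ B ++ Xbar Bs Ls Rs X k ++ S ∧
      (expandStr A).length ≤ i ∧ B.length ≤ k ∧
      (expandStr (A ++ B)).length
        = i + (expandStr (((List.range k).map (Lblk Bs Ls Rs X)).flatten)).length := by
  induction k with
  | zero =>
    refine ⟨(T.take i).map .sym, [], ((T.drop i).drop X.length).map .sym, ?_, ?_, ?_, ?_⟩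
    · have hT : T = T.take i ++ X ++ (T.drop i).drop X.length := by
        conv_rhs => enter [1, 2]; rw [← hocc]
        rw [List.append_assoc, List.take_append_drop, List.take_append_drop]
      simp only [Tseq, Xbar, List.append_nil, ← List.map_append]
      rw [← hT]
    · rw [expandStr_map_sym, List.length_take]
      omega
    · simp
    · simp only [List.append_nil, expandStr_map_sym, List.length_take]
      simp [expandStr]
      omega
  | succ k ih =>
    have hg := shortOrUniform_glueK Bs Ls Rs hdisj (k + 1)
    have hne : popped (glueK Bs Ls Rs (k + 1)) (Xbar Bs Ls Rs X k) ≠ [] := by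
      intro h
      apply hk
      simp [Xbar_succ, h, shrinkK, shrinkWith, chunks]
    obtain ⟨A, B, S, hT, hA, hB, hAB⟩ := ih (by
      intro h
      apply hne
      simp [h, popped])
    obtain ⟨A', B', S', hT', hA', hB', hAB'⟩ := exists_shrinkWith_eq hg (A := A) (B := B)
      (S := S) hne
    refine ⟨A', B', S', ?_, hA'.trans hA, by omega, ?_⟩
    · simp only [Tseq, hT, shrinkK, Xbar_succ, hT']
    · rw [hAB', expandStr_append, List.length_append, hAB]
      simp [List.range_succ, expandStr_append, Lblk, Nat.add_assoc]

end Recompression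

/-- Let `X ∈ Σ⁺` occur in `T ∈ Σ*` at position `i`, and let `k ≥ 0`
with `X̄_k ≠ ε`. Let `i_k` be the position of `T_k` with
`|exp(T_k[0..i_k))| = i + |exp(L_0 ⋯ L_{k−1})|` and let `i'_k` be the position with
`|exp(T_k[0..i'_k))| ≤ i < |exp(T_k[0..i'_k+1))|` (the ancestor of `T[i]` in `T_k`).
Then `i'_k ≤ i_k ≤ i'_k + k`. -/
theorem anchor_distance (Bs Ls Rs : ℕ → Set (UA α))
    [∀ k, DecidablePred (· ∈ Bs k)] [∀ k, DecidablePred (· ∈ Ls k)]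
    [∀ k, DecidablePred (· ∈ Rs k)]
    (hdisj : ∀ k, k % 2 = 0 → Disjoint (Ls k) (Rs k))
    (T X : List α) (hX : X ≠ []) (i : ℕ)
    (hocc : i + X.length ≤ T.length ∧ (T.drop i).take X.length = X)
    (k : ℕ) (hk : Xbar Bs Ls Rs X k ≠ [])
    (ik : ℕ) (hik1 : ik ≤ (Tseq Bs Ls Rs T k).length)
    (hik2 : (expandStr ((Tseq Bs Ls Rs T k).take ik)).length
      = i + (expandStr (((List.range k).map (Lblk Bs Ls Rs X)).flatten)).length)
    (i'k : ℕ) (hi'k1 : i'k < (Tseq Bs Ls Rs T k).length)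
    (hi'k2 : (expandStr ((Tseq Bs Ls Rs T k).take i'k)).length ≤ i)
    (hi'k3 : i < (expandStr ((Tseq Bs Ls Rs T k).take (i'k + 1))).length) :
    i'k ≤ ik ∧ ik ≤ i'k + k := by
  obtain ⟨A, B, S, hT, hA, hB, hAB⟩ := exists_Tseq_eq Bs Ls Rs hdisj hocc.1 hocc.2 k hk
  have mono := fun m n => @length_expandStr_take_lt _ (Tseq Bs Ls Rs T k) m n
  have hlen := congrArg List.length hT
  simp only [List.length_append] at hlen
  have htA : (Tseq Bs Ls Rs T k).take A.length = A := by simp [hT, List.append_assoc]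
  have htAB : (Tseq Bs Ls Rs T k).take (A.length + B.length) = A ++ B := by
    rw [hT, ← List.length_append, List.append_assoc, List.take_left]
  have hA_le : A.length ≤ i'k := by
    by_contra h
    have : i'k + 1 = A.length ∨ i'k + 1 < A.length := by omega
    rcases this with h | h
    · rw [h, htA] at hi'k3
      omega
    · have := mono _ _ h (by omega)
      rw [htA] at this
      omega
  have hik_le : ik ≤ A.length + B.length := by
    by_contra h
    have := mono _ _ (not_le.1 h) hik1
    rw [htAB] at this
    omega
  refine ⟨?_, by omega⟩
  by_contra h
  have := mono _ _ (not_le.1 h) hi'k1.le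
  omega

end IPM
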